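/- Let A be a CCR (liminal) C*-algebra and A⁺ its unitization. Then A⁺ is directly finite: if a, b ∈ A⁺ satisfy ab = 1, then ba = 1. -/

import Mathlib

open scoped ComplexOrder InnerProductSpace ComplexStarModule

namespace CCRAux

/-- The states of a unital C*-algebra, as a subset of the space of all functions. -/
def stateSet (B : Type) [CStarAlgebra B] [PartialOrder B] : Set (B → ℂ) :=
  {f | (∀ x y, f (x + y) = f x + f y) ∧ (∀ (c : ℂ) x, f (c • x) = c * f x) ∧
    (∀ x, 0 ≤ x → 0 ≤ f x) ∧ f 1 = 1}

variable {B : Type} [CStarAlgebra B] [PartialOrder B]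

/-- A state as a positive linear map. -/
noncomputable def toPos [IsOrderedAddMonoid B] {f : B → ℂ} (hf : f ∈ stateSet B) : B →ₚ[ℂ] ℂ :=
  PositiveLinearMap.mk₀ { toFun := f, map_add' := hf.1, map_smul' := hf.2.1 } hf.2.2.1

theorem toPos_apply [IsOrderedAddMonoid B] {f : B → ℂ} (hf : f ∈ stateSet B) (x : B) :
    toPos hf x = f x := rfl

variable [StarOrderedRing B]

theorem state_bound {f : B → ℂ} (hf : f ∈ stateSet B) (x : B) : ‖f x‖ ≤ 4 * ‖x‖ := by
  obtain ⟨y, hy0, hyn, hy⟩ := CStarAlgebra.exists_sum_four_nonneg x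
  have key : ∀ i, ‖f (y i)‖ ≤ ‖x‖ := fun i => by
    have := PositiveLinearMap.norm_apply_le_of_nonneg (toPos hf) (y i) (hy0 i)
    rw [toPos_apply, toPos_apply, hf.2.2.2] at this
    simpa using this.trans (by simpa using hyn i)
  have h2 : f x = ∑ i : Fin 4, Complex.I ^ (i : ℕ) * f (y i) := by
    rw [← toPos_apply hf x, hy, map_sum]
    simp [toPos_apply]
  rw [h2]
  refine (norm_sum_le _ _).trans ?_
  refine (Finset.sum_le_sum (g := fun _ => ‖x‖) fun i _ => ?_).trans (by simp)
  simpa using key i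

theorem stateSet_isClosed : IsClosed (stateSet B) := by
  have e : stateSet B = (⋂ x, ⋂ y, {f : B → ℂ | f (x + y) = f x + f y}) ∩
      ((⋂ c : ℂ, ⋂ x, {f : B → ℂ | f (c • x) = c * f x}) ∩
      ((⋂ x, ⋂ (_ : 0 ≤ x), {f : B → ℂ | 0 ≤ f x}) ∩ {f | f 1 = 1})) := by
    ext f
    simp [stateSet]
  rw [e]
  refine IsClosed.inter ?_ (IsClosed.inter ?_ (IsClosed.inter ?_ ?_))
  · exact isClosed_iInter fun x => isClosed_iInter fun y => isClosed_eq (by fun_prop) (by fun_prop)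
  · exact isClosed_iInter fun x => isClosed_iInter fun y => isClosed_eq (by fun_prop) (by fun_prop)
  · exact isClosed_iInter fun x => isClosed_iInter fun y => isClosed_le (by fun_prop) (by fun_prop)
  · exact isClosed_eq (by fun_prop) (by fun_prop)

theorem stateSet_isCompact : IsCompact (stateSet B) := by
  refine IsCompact.of_isClosed_subset
    (isCompact_univ_pi (s := fun x : B => Metric.closedBall (0 : ℂ) (4 * ‖x‖))
      fun x => isCompact_closedBall _ _) stateSet_isClosed ?_
  intro f hf x _
  simpa using state_bound hf x

theorem stateSet_convex : Convex ℝ (stateSet B) := by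
  intro f hf g hg s t hs ht hst
  refine ⟨fun x y => ?_, fun c x => ?_, fun x hx => ?_, ?_⟩
  · simp [hf.1, hg.1]; ring
  · simp [hf.2.1, hg.2.1]; ring
  · have h1 := hf.2.2.1 x hx
    have h2 := hg.2.2.1 x hx
    simp only [Pi.add_apply, Pi.smul_apply]
    exact add_nonneg (smul_nonneg hs h1) (smul_nonneg ht h2)
  · simp [hf.2.2.2, hg.2.2.2]
    exact_mod_cast hst

theorem exists_state (d : B) (hd : 0 ≤ d) (hd0 : d ≠ 0) : ∃ f ∈ stateSet B, f d ≠ 0 := by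
  have hnot : -d ∉ ProperCone.positive ℝ B := by
    rw [ProperCone.mem_positive]
    intro h
    exact hd0 (le_antisymm (neg_nonneg.mp h) hd)
  obtain ⟨u, hu, hu0⟩ := (ProperCone.positive ℝ B).hyperplane_separation_point hnot
  have hpos : ∀ x : B, 0 ≤ x → 0 ≤ u x := fun x hx => hu x hx
  have hud : 0 < u d := by simpa using hu0
  have hu1 : 0 < u 1 := by
    have h1 : 0 ≤ (algebraMap ℝ B ‖d‖) - d :=
      sub_nonneg.mpr (IsSelfAdjoint.le_algebraMap_norm_self (.of_nonneg hd))
    have h2 := hpos _ h1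
    rw [map_sub, Algebra.algebraMap_eq_smul_one, map_smul, smul_eq_mul] at h2
    have h3 : 0 < ‖d‖ * u 1 := by linarith
    exact pos_of_mul_pos_right h3 (norm_nonneg _)
  have hsa : ∀ x : B, 0 ≤ x → (ℜ x : B) = x ∧ (ℑ x : B) = 0 := fun x hx => by
    have h : IsSelfAdjoint x := .of_nonneg hx
    exact ⟨h.coe_realPart, by simp [h.imaginaryPart]⟩
  refine ⟨fun x => ((u 1)⁻¹ : ℝ) * ((u (ℜ x : B) : ℂ) + Complex.I * (u (ℑ x : B) : ℂ)),
    ⟨fun x y => ?_, fun c x => ?_, fun x hx => ?_, ?_⟩, ?_⟩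
  · simp; ring
  · simp only [realPart_smul, imaginaryPart_smul, AddSubgroupClass.coe_sub, AddSubgroup.coe_add,
      selfAdjoint.val_smul, map_sub, map_add, map_smul, smul_eq_mul]
    apply Complex.ext <;> simp <;> ring
  · beta_reduce
    rw [(hsa x hx).1, (hsa x hx).2]
    have := hpos x hx
    simp only [map_zero, Complex.ofReal_zero, mul_zero, add_zero]
    rw [← Complex.ofReal_mul]
    exact_mod_cast mul_nonneg (inv_nonneg.mpr hu1.le) this
  · beta_reduce
    rw [(hsa 1 zero_le_one).1, (hsa 1 zero_le_one).2]
    have : (u 1 : ℂ) ≠ 0 := by exact_mod_cast hu1.ne'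
    simp [this]
  · beta_reduce
    rw [(hsa d hd).1, (hsa d hd).2]
    simp [hu1.ne', hud.ne']

theorem exists_extreme_state (d : B) (hd : 0 ≤ d) (hd0 : d ≠ 0) :
    ∃ f ∈ (stateSet B).extremePoints ℝ, f d ≠ 0 := by
  by_contra! h
  obtain ⟨f, hf, hfd⟩ := exists_state d hd hd0
  rw [← closure_convexHull_extremePoints stateSet_isCompact stateSet_convex] at hf
  have hsub : closure (convexHull ℝ ((stateSet B).extremePoints ℝ)) ⊆ {f : B → ℂ | f d = 0} := by
    refine closure_minimal (convexHull_min h ?_) (isClosed_eq (by fun_prop) (by fun_prop))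
    intro f hf g hg s t _ _ _
    simp only [Set.mem_ofPred_eq] at hf hg ⊢
    simp [hf, hg]
  exact hfd (hsub hf)

/-- vector functional of a representation -/
theorem vec_state {H : Type} [NormedAddCommGroup H] [InnerProductSpace ℂ H] [CompleteSpace H]
    (π : B →⋆ₐ[ℂ] (H →L[ℂ] H)) (v : H) (hv : v ≠ 0) :
    (fun x : B => (((‖v‖ ^ 2)⁻¹ : ℝ) : ℂ) * ⟪v, π x v⟫_ℂ) ∈ stateSet B := by
  have hn : ‖v‖ ^ 2 ≠ 0 := by simpa using hv
  refine ⟨fun x y => ?_, fun c x => ?_, fun x hx => ?_, ?_⟩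
  · simp [inner_add_right]; ring
  · simp [inner_smul_right]; ring
  · obtain ⟨y, rfl⟩ := CStarAlgebra.nonneg_iff_eq_star_mul_self.mp hx
    have h : ⟪v, π (star y * y) v⟫_ℂ = ((‖π y v‖ ^ 2 : ℝ) : ℂ) := by
      rw [map_mul, map_star, mul_apply_eq_comp, ContinuousLinearMap.star_eq_adjoint,
        ContinuousLinearMap.adjoint_inner_right, inner_self_eq_norm_sq_to_K]
      simp
    beta_reduce
    rw [h, ← Complex.ofReal_mul]
    exact_mod_cast (by positivity : (0 : ℝ) ≤ (‖v‖ ^ 2)⁻¹ * ‖π y v‖ ^ 2)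
  · have h : ⟪v, v⟫_ℂ = ((‖v‖ ^ 2 : ℝ) : ℂ) := by
      rw [inner_self_eq_norm_sq_to_K]; simp
    simp only [map_one, one_apply_eq_self]
    rw [h, ← Complex.ofReal_mul, inv_mul_cancel₀ hn, Complex.ofReal_one]

/-- A cyclic representation whose vector state is extreme is irreducible. -/
theorem irred_of_extreme {H : Type} [NormedAddCommGroup H] [InnerProductSpace ℂ H]
    [CompleteSpace H] (π : B →⋆ₐ[ℂ] (H →L[ℂ] H)) (ξ : H)
    (hcyc : Dense (Set.range fun x : B => π x ξ))
    (hext : (fun x : B => ⟪ξ, π x ξ⟫_ℂ) ∈ (stateSet B).extremePoints ℝ)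
    (U : Submodule ℂ H) (hU : IsClosed (U : Set H)) (hinv : ∀ b : B, ∀ x ∈ U, π b x ∈ U) :
    U = ⊥ ∨ U = ⊤ := by
  have : CompleteSpace U := hU.completeSpace_coe
  have full : ∀ W : Submodule ℂ H, IsClosed (W : Set H) → (∀ b : B, ∀ x ∈ W, π b x ∈ W) →
      ξ ∈ W → W = ⊤ := by
    intro W hW hWi hξ
    rw [Submodule.eq_top_iff']
    intro x
    have h1 : closure (Set.range fun x : B => π x ξ) ⊆ W :=
      closure_minimal (by rintro _ ⟨b, rfl⟩; exact hWi b ξ hξ) hW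
    exact h1 (hcyc x)
  have hinv' : ∀ b : B, ∀ x ∈ Uᗮ, π b x ∈ Uᗮ := by
    intro b x hx
    rw [Submodule.mem_orthogonal] at hx ⊢
    intro u hu
    have h := hx _ (hinv (star b) u hu)
    rwa [map_star, ContinuousLinearMap.star_eq_adjoint,
      ContinuousLinearMap.adjoint_inner_left] at h
  obtain ⟨p, hp, q, hq, hpq⟩ := U.exists_add_mem_mem_orthogonal ξ
  by_cases hp0 : p = 0
  · left
    have hξ : ξ ∈ Uᗮ := by rw [hpq, hp0, zero_add]; exact hq
    have := full Uᗮ U.isClosed_orthogonal hinv' hξ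
    exact (Submodule.orthogonal_eq_top_iff U).mp this
  right
  refine full U hU hinv ?_
  by_cases hq0 : q = 0
  · rw [hpq, hq0, add_zero]; exact hp
  have hone : ‖p‖ ^ 2 + ‖q‖ ^ 2 = 1 := by
    have h1 : ⟪ξ, ξ⟫_ℂ = 1 := by simpa using hext.1.2.2.2
    have h2 : ‖ξ‖ ^ 2 = 1 := by
      rw [inner_self_eq_norm_sq_to_K, RCLike.ofReal_eq_complex_ofReal] at h1
      exact_mod_cast h1
    have h3 : ⟪p, q⟫_ℂ = 0 := hq p hp
    have h4 := norm_add_sq_eq_norm_sq_add_norm_sq_of_inner_eq_zero p q h3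
    rw [← hpq] at h4
    nlinarith
  have hpp : 0 < ‖p‖ ^ 2 := by positivity
  have hqp : 0 < ‖q‖ ^ 2 := by positivity
  have hcross1 : ∀ x, ⟪p, π x q⟫_ℂ = 0 := fun x => hinv' x q hq p hp
  have hcross2 : ∀ x, ⟪q, π x p⟫_ℂ = 0 := fun x => by
    rw [← inner_conj_symm, hq _ (hinv x p hp), map_zero]
  have hseg : (fun x : B => ⟪ξ, π x ξ⟫_ℂ) ∈ openSegment ℝ
      (fun x : B => (((‖p‖ ^ 2)⁻¹ : ℝ) : ℂ) * ⟪p, π x p⟫_ℂ)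
      (fun x : B => (((‖q‖ ^ 2)⁻¹ : ℝ) : ℂ) * ⟪q, π x q⟫_ℂ) := by
    refine ⟨‖p‖ ^ 2, ‖q‖ ^ 2, hpp, hqp, hone, ?_⟩
    funext x
    simp only [Pi.add_apply, Pi.smul_apply, Complex.real_smul]
    rw [← mul_assoc, ← mul_assoc, ← Complex.ofReal_mul, ← Complex.ofReal_mul,
      mul_inv_cancel₀ hpp.ne', mul_inv_cancel₀ hqp.ne', hpq]
    simp [inner_add_left, inner_add_right, hcross1, hcross2]
  have heq := hext.2 (vec_state π p hp0) (vec_state π q hq0) hseg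
  have hval : ∀ x, ⟪p - (‖p‖ ^ 2 : ℂ) • ξ, π x ξ⟫_ℂ = 0 := by
    intro x
    have h1 := congrFun heq x
    have hc : ((‖p‖ : ℂ)) ≠ 0 := by simpa using hp0
    have h2 : ⟪p, π x ξ⟫_ℂ = ⟪p, π x p⟫_ℂ := by
      conv_lhs => rw [hpq]
      simp [inner_add_right, hcross1]
    rw [inner_sub_left, inner_smul_left, h2, ← h1]
    simp
    field_simp
    simp
  have hzero : p - (‖p‖ ^ 2 : ℂ) • ξ = 0 := by
    refine hcyc.eq_zero_of_inner_left (𝕜 := ℂ) ?_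
    rintro _ ⟨x, rfl⟩
    exact hval x
  have hc : ((‖p‖ : ℂ) ^ 2) ≠ 0 := by simpa using hp0
  rw [sub_eq_zero] at hzero
  rw [← Submodule.smul_mem_iff U hc, ← hzero]
  exact hp

theorem exists_irred (c : B) (hc : c ≠ 0) :
    ∃ (H : Type) (_ : NormedAddCommGroup H) (_ : InnerProductSpace ℂ H) (_ : CompleteSpace H)
      (π : B →⋆ₐ[ℂ] (H →L[ℂ] H)),
      (∀ U : Submodule ℂ H, IsClosed (U : Set H) → (∀ b : B, ∀ x ∈ U, π b x ∈ U) →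
        U = ⊥ ∨ U = ⊤) ∧ π c ≠ 0 := by
  obtain ⟨f, hf, hfc⟩ := exists_extreme_state (star c * c) (star_mul_self_nonneg c)
    (by simpa [CStarRing.star_mul_self_eq_zero_iff] using hc)
  set F := toPos hf.1 with hF
  let ξ : F.GNS := ((F.toPreGNS 1 : F.PreGNS) : F.GNS)
  have hξ : ∀ x : B, F.gnsStarAlgHom x ξ = ((F.toPreGNS x : F.PreGNS) : F.GNS) := by
    intro x
    simp [ξ]
  have hfx : ∀ x : B, ⟪ξ, F.gnsStarAlgHom x ξ⟫_ℂ = f x := by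
    intro x
    rw [hξ, UniformSpace.Completion.inner_coe, PositiveLinearMap.preGNS_inner_def]
    simp [hF, toPos_apply]
  refine ⟨F.GNS, inferInstance, inferInstance, inferInstance, F.gnsStarAlgHom, ?_, ?_⟩
  · refine irred_of_extreme F.gnsStarAlgHom ξ ?_ ?_
    · have h := UniformSpace.Completion.denseRange_coe (α := F.PreGNS)
      refine h.mono ?_
      rintro _ ⟨y, rfl⟩
      exact ⟨F.ofPreGNS y, by simp only [hξ]; simp⟩
    · have : (fun x : B => ⟪ξ, F.gnsStarAlgHom x ξ⟫_ℂ) = f := funext hfx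
      rw [this]
      exact hf
  · intro h0
    apply hfc
    rw [← hfx, map_mul, h0]
    simp

end CCRAux

/-- Direct finiteness of `ℂ + K(H)`. -/
theorem CCRAux.compact_df {H : Type} [NormedAddCommGroup H] [InnerProductSpace ℂ H]
    [CompleteSpace H] (S T K : H →L[ℂ] H) (m : ℂ) (hm : m ≠ 0) (hK : IsCompactOperator K)
    (hT : T = m • 1 + K) (hST : S * T = 1) : T * S = 1 := by
  have hinj : ∀ x, T x = 0 → x = 0 := fun x hx => by
    have := congrArg (fun R : H →L[ℂ] H => R x) hST
    simpa [hx] using this.symm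
  have hunit : IsUnit T := by
    rcases hK.hasEigenvalue_or_mem_resolventSet (neg_ne_zero.mpr hm) with h | h
    · obtain ⟨v, hv⟩ := h.exists_hasEigenvector
      have h1 : K v = (-m) • v := hv.apply_eq_smul
      exact absurd (hinj v (by simp [hT, h1])) hv.2
    · rw [spectrum.mem_resolventSet_iff, ← IsUnit.neg_iff] at h
      convert h using 1
      rw [hT, Algebra.algebraMap_eq_smul_one, neg_smul]
      abel
  obtain ⟨u, rfl⟩ := hunit
  have hS : S = ((u⁻¹ : (H →L[ℂ] H)ˣ) : H →L[ℂ] H) := by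
    rw [← mul_one S, ← Units.mul_inv u, ← mul_assoc, hST, one_mul]
  rw [hS]
  exact Units.mul_inv u

/-- The unitization of a CCR (liminal) C*-algebra is directly finite. Here CCR means:
for every irreducible *-representation `π` of `A` on a Hilbert space, every `π a` is a
compact operator. -/
theorem ccr_unitization_directlyFinite
    (A : Type) [NonUnitalNormedRing A] [StarRing A] [CStarRing A]
    [NormedSpace ℂ A] [IsScalarTower ℂ A A] [SMulCommClass ℂ A A] [StarModule ℂ A]
    [CompleteSpace A]
    (hCCR : ∀ (H : Type) [NormedAddCommGroup H] [InnerProductSpace ℂ H] [CompleteSpace H]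
      (π : A →⋆ₙₐ[ℂ] (H →L[ℂ] H)),
      (∀ U : Submodule ℂ H, IsClosed (U : Set H) → (∀ a : A, ∀ x ∈ U, π a x ∈ U) →
        U = ⊥ ∨ U = ⊤) →
      ∀ a : A, IsCompactOperator ⇑(π a))
    (a b : Unitization ℂ A) (hab : a * b = 1) : b * a = 1 := by
  letI : NonUnitalCStarAlgebra A := { }
  letI : PartialOrder (Unitization ℂ A) := CStarAlgebra.spectralOrder _
  haveI : StarOrderedRing (Unitization ℂ A) := CStarAlgebra.spectralOrderedRing _
  by_contra hne
  obtain ⟨H, _, _, _, π, hirr, hπ⟩ := CCRAux.exists_irred (b * a - 1) (sub_ne_zero.mpr hne)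
  apply hπ
  have hdec : ∀ x : Unitization ℂ A, π x = x.fst • 1 + π (x.snd : Unitization ℂ A) := by
    intro x
    conv_lhs => rw [← Unitization.inl_fst_add_inr_snd_eq x]
    rw [map_add, ← Unitization.algebraMap_eq_inl, AlgHomClass.commutes,
      Algebra.algebraMap_eq_smul_one]
  let ρ : A →⋆ₙₐ[ℂ] (H →L[ℂ] H) :=
    (π : Unitization ℂ A →⋆ₙₐ[ℂ] (H →L[ℂ] H)).comp (Unitization.inrNonUnitalStarAlgHom ℂ A)
  have hρ : ∀ x : A, ρ x = π (x : Unitization ℂ A) := fun x => rfl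
  have hcomp : IsCompactOperator ⇑(ρ b.snd) := by
    refine hCCR H ρ ?_ b.snd
    intro U hU hUi
    refine hirr U hU fun x v hv => ?_
    rw [hdec x]
    exact U.add_mem (U.smul_mem _ hv) (hUi x.snd v hv)
  have hfst : b.fst ≠ 0 := by
    intro h0
    have := congrArg (fun x : Unitization ℂ A => x.fst) hab
    simp [h0] at this
  have := CCRAux.compact_df (π a) (π b) (ρ b.snd) b.fst hfst hcomp (hdec b)
    (by rw [← map_mul, hab, map_one])
  rw [map_sub, map_mul, this, map_one, sub_self]
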